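/- Let L ≥ 6 and N = ⌈L(L+1)/4⌉. Fix i with 2 ≤ i ≤ L − 2, and let {H_n} be the PLRS generated by the L coefficients [1, c_2, ..., c_{L−2}, 0, N] where c_i = 1 and c_j = 0 for all other j with 2 ≤ j ≤ L − 2. Then {H_n} is complete. -/

import Mathlib

/-- `H` (indexed from 1) is the Positive Linear Recurrence Sequence generated by the
coefficients `c 1, …, c L` (nonnegative integers with `L`, `c 1`, `c L` positive):
`H 1 = 1`, `H (n+1) = c 1 * H n + ⋯ + c n * H 1 + 1` for `1 ≤ n < L`, and
`H (n+1) = c 1 * H n + ⋯ + c L * H (n+1-L)` for `n ≥ L`. -/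
def IsPLRS (L : ℕ) (c : ℕ → ℕ) (H : ℕ → ℕ) : Prop :=
  0 < L ∧ 0 < c 1 ∧ 0 < c L ∧ H 1 = 1 ∧
  (∀ n, 1 ≤ n → n < L →
    H (n + 1) = (∑ j ∈ Finset.Icc 1 n, c j * H (n + 1 - j)) + 1) ∧
  (∀ n, L ≤ n →
    H (n + 1) = ∑ j ∈ Finset.Icc 1 L, c j * H (n + 1 - j))

/-- A sequence (indexed from 1) is complete if every positive integer is a sum of
terms of the sequence over a finite set of distinct indices (each ≥ 1). -/
def SeqComplete (H : ℕ → ℕ) : Prop :=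
  ∀ m : ℕ, 0 < m → ∃ S : Finset ℕ, (∀ i ∈ S, 1 ≤ i) ∧ m = ∑ i ∈ S, H i

/-- The `n`th Brown's gap of a sequence: `B_{H,n} = 1 + ∑_{i=1}^{n-1} H i − H n`. -/
def BrownGap (H : ℕ → ℕ) (n : ℕ) : ℤ :=
  1 + (∑ i ∈ Finset.Icc 1 (n - 1), (H i : ℤ)) - (H n : ℤ)

/-!
By Brown's criterion it suffices that every gap `B n = 1 + H 1 + ⋯ + H (n - 1) - H n` is
nonnegative. The gaps of a PLRS satisfy the recurrence of the sequence up to a constant, so the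
gaps up to `L` agree with the sequence `A` given by `A (n + 1) = A n + A (n + 1 - i) + n - 2`, which
does not involve `L` and `N`. At the next two indices, `B (L + 1) = A (L + 1) + 1 - N` and
`B (L + 2) = A (L + 2) + 1 - 2 * N`. As `A` is never far below the parabola
`(n - 1) * (n - 2) / 2`, and is eventually above it, `B (L + 2)` is nonnegative as long as
`2 * N ≤ L * (L + 1) / 2 + 1`, which is where the value of `N` comes from. All the later gaps are
positive: in `B (n + 1) = B n + B (n + 1 - i) + N * (B (n + 1 - L) - 1) + L - 1` the term with `N`
is negative only if `B (n + 1 - L) = 0`, that is, for `n ≤ L + 2` and possibly for `n = 2 * L + 1`;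
in the latter case `B (2 * L + 1) ≥ N` compensates for it.
-/

open Finset

lemma brownGap_succ (H : ℕ → ℕ) (n : ℕ) :
    BrownGap H (n + 1) = 1 + ∑ k ∈ Icc 1 n, (H k : ℤ) - H (n + 1) := rfl

section Brown

variable {H : ℕ → ℕ}

lemma exists_sum_eq_of_brownGap_nonneg (hB : ∀ n, 1 ≤ n → 0 ≤ BrownGap H n) (n m : ℕ)
    (hm : m ≤ ∑ k ∈ Icc 1 n, H k) : ∃ S ⊆ Icc 1 n, m = ∑ k ∈ S, H k := by
  induction n generalizing m with
  | zero => exact ⟨∅, empty_subset _, by simpa using hm⟩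
  | succ n ih =>
    have hIcc : insert (n + 1) (Icc 1 n) = Icc 1 (n + 1) :=
      insert_Icc_right_eq_Icc_add_one (by omega)
    rcases le_or_gt m (∑ k ∈ Icc 1 n, H k) with h | h
    · obtain ⟨S, hS, rfl⟩ := ih m h
      exact ⟨S, hIcc ▸ hS.trans (subset_insert _ _), rfl⟩
    · have hgap : H (n + 1) ≤ 1 + ∑ k ∈ Icc 1 n, H k := by
        have := hB (n + 1) (by omega)
        rw [brownGap_succ] at this
        zify
        linarith
      rw [sum_Icc_succ_top (by omega)] at hm
      obtain ⟨S, hS, hsum⟩ := ih (m - H (n + 1)) (by omega)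
      have hn : n + 1 ∉ S := fun hmem ↦ by simpa using hS hmem
      refine ⟨insert (n + 1) S, hIcc ▸ insert_subset_insert _ hS, ?_⟩
      rw [sum_insert hn]
      omega

theorem seqComplete_of_brownGap_nonneg (hpos : ∀ n, 1 ≤ n → 0 < H n)
    (hB : ∀ n, 1 ≤ n → 0 ≤ BrownGap H n) : SeqComplete H := by
  intro m _
  have hm : m ≤ ∑ k ∈ Icc 1 m, H k := by
    simpa using card_nsmul_le_sum (Icc 1 m) H 1 fun k hk ↦ hpos k (mem_Icc.1 hk).1
  obtain ⟨S, hS, hsum⟩ := exists_sum_eq_of_brownGap_nonneg hB m m hm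
  exact ⟨S, fun k hk ↦ (mem_Icc.1 (hS hk)).1, hsum⟩

end Brown

lemma sum_mul_sum_Icc_succ (c H : ℕ → ℕ) {m n : ℕ} (hmn : m ≤ n) :
    ∑ j ∈ Icc 1 m, c j * ∑ k ∈ Icc 1 (n + 1 - j), H k =
      ∑ j ∈ Icc 1 m, c j * ∑ k ∈ Icc 1 (n - j), H k + ∑ j ∈ Icc 1 m, c j * H (n + 1 - j) := by
  rw [← sum_add_distrib]
  refine sum_congr rfl fun j hj ↦ ?_
  have hj' : j ≤ n := (mem_Icc.1 hj).2.trans hmn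
  rw [Nat.sub_add_comm hj', sum_Icc_succ_top (by omega), mul_add]

lemma sum_mul_brownGap_sub_one (c H : ℕ → ℕ) {m n : ℕ} (hmn : m ≤ n) :
    ∑ j ∈ Icc 1 m, (c j : ℤ) * (BrownGap H (n + 1 - j) - 1) =
      (∑ j ∈ Icc 1 m, c j * ∑ k ∈ Icc 1 (n - j), H k : ℕ) -
        (∑ j ∈ Icc 1 m, c j * H (n + 1 - j) : ℕ) := by
  push_cast
  rw [← sum_sub_distrib]
  refine sum_congr rfl fun j hj ↦ ?_
  have hj' : j ≤ n := (mem_Icc.1 hj).2.trans hmn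
  rw [Nat.sub_add_comm hj', brownGap_succ]
  ring

namespace IsPLRS

variable {L : ℕ} {c H : ℕ → ℕ}

lemma pos (hH : IsPLRS L c H) {n : ℕ} (hn : 1 ≤ n) : 0 < H n := by
  obtain ⟨hL, hc, -, hone, hlt, hge⟩ := hH
  induction n, hn using Nat.le_induction with
  | base => omega
  | succ n hn ih =>
    rcases lt_or_ge n L with h | h
    · rw [hlt n hn h]
      omega
    · rw [hge n h]
      exact (Nat.mul_pos hc ih).trans_le <| single_le_sum
        (f := fun j ↦ c j * H (n + 1 - j)) (fun _ _ ↦ Nat.zero_le _) (mem_Icc.2 ⟨le_rfl, hL⟩)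

lemma sum_Icc_of_le (hH : IsPLRS L c H) {n : ℕ} (hn : n ≤ L) :
    ∑ k ∈ Icc 1 n, H k = ∑ j ∈ Icc 1 n, c j * ∑ k ∈ Icc 1 (n - j), H k + n := by
  obtain ⟨-, -, -, hone, hlt, -⟩ := hH
  induction n with
  | zero => simp
  | succ n ih =>
    have hrec : H (n + 1) = ∑ j ∈ Icc 1 n, c j * H (n + 1 - j) + 1 := by
      rcases n.eq_zero_or_pos with rfl | hpos
      · simpa using hone
      · exact hlt n hpos hn
    rw [sum_Icc_succ_top (by omega), ih (by omega), hrec,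
      sum_Icc_succ_top (f := fun j ↦ c j * _) (by omega), sum_mul_sum_Icc_succ c H le_rfl]
    simp only [tsub_self, Order.lt_one_iff, Icc_eq_empty_of_lt, sum_empty, mul_zero, add_zero]
    ring

lemma sum_Icc_of_ge (hH : IsPLRS L c H) {n : ℕ} (hn : L ≤ n) :
    ∑ k ∈ Icc 1 n, H k = ∑ j ∈ Icc 1 L, c j * ∑ k ∈ Icc 1 (n - j), H k + L := by
  induction n, hn using Nat.le_induction with
  | base => exact hH.sum_Icc_of_le le_rfl
  | succ n hn ih =>
    obtain ⟨-, -, -, -, -, hge⟩ := hH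
    rw [sum_Icc_succ_top (by omega), ih, hge n hn, sum_mul_sum_Icc_succ c H hn]
    ring

lemma brownGap_one (hH : IsPLRS L c H) : BrownGap H 1 = 0 := by
  simp [BrownGap, hH.2.2.2.1]

lemma brownGap_succ_of_lt (hH : IsPLRS L c H) {n : ℕ} (hn : 1 ≤ n) (hnL : n < L) :
    BrownGap H (n + 1) = ∑ j ∈ Icc 1 n, (c j : ℤ) * (BrownGap H (n + 1 - j) - 1) + n := by
  have hsum := hH.sum_Icc_of_le hnL.le
  obtain ⟨-, -, -, -, hlt, -⟩ := hH
  rw [sum_mul_brownGap_sub_one c H le_rfl, brownGap_succ, ← Nat.cast_sum, hsum, hlt n hn hnL]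
  push_cast
  ring

lemma brownGap_succ_of_ge (hH : IsPLRS L c H) {n : ℕ} (hnL : L ≤ n) :
    BrownGap H (n + 1) =
      ∑ j ∈ Icc 1 L, (c j : ℤ) * (BrownGap H (n + 1 - j) - 1) + L + 1 := by
  have hsum := hH.sum_Icc_of_ge hnL
  obtain ⟨-, -, -, -, -, hge⟩ := hH
  rw [sum_mul_brownGap_sub_one c H hnL, brownGap_succ, ← Nat.cast_sum, hsum, hge n hnL]
  push_cast
  ring

end IsPLRS

section FreeGap

variable {i n : ℕ}

/-- The sequence of Brown's gaps, for `n ≥ 1`, of `H 1 = 1`, `H (n + 1) = H n + H (n + 1 - i) + 1`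
(where `H m = 0` for `m ≤ 0`): the limiting case `L = ∞` of the PLRS with coefficients
`[1, 0, …, 0, 1, 0, …, 0, N]`. The value `1` at `0` makes the recurrence hold also for `n < i`,
where the truncated index `n + 1 - i` is `0`. -/
def freeGap (i : ℕ) : ℕ → ℤ
  | 0 => 1
  | n + 1 => freeGap i n + freeGap i (n - (i - 1)) + n - 2

lemma freeGap_zero : freeGap i 0 = 1 := by rw [freeGap]

lemma freeGap_succ (hi : 1 ≤ i) (n : ℕ) :
    freeGap i (n + 1) = freeGap i n + freeGap i (n + 1 - i) + n - 2 := by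
  rw [freeGap, show n - (i - 1) = n + 1 - i by omega]

lemma freeGap_one : freeGap i 1 = 0 := by
  simp [freeGap]

lemma freeGap_two (hi : 2 ≤ i) : freeGap i 2 = 0 := by
  rw [freeGap_succ (by omega), freeGap_one, Nat.sub_eq_zero_of_le hi, freeGap_zero]
  norm_num

lemma freeGap_nonneg (hi : 2 ≤ i) (n : ℕ) : 0 ≤ freeGap i n := by
  induction n using Nat.strong_induction_on with
  | _ n ih =>
    match n with
    | 0 => simp [freeGap_zero]
    | 1 => exact freeGap_one.ge
    | 2 => exact (freeGap_two hi).ge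
    | n + 3 =>
      have h₁ := ih (n + 2) (by omega)
      have h₂ := ih (n + 3 - i) (by omega)
      rw [freeGap_succ (by omega)]
      push_cast
      linarith

lemma sub_three_le_freeGap (hi : 2 ≤ i) (hn : 1 ≤ n) : (n : ℤ) - 3 ≤ freeGap i n := by
  obtain ⟨n, rfl⟩ := Nat.exists_eq_add_of_le' hn
  rw [freeGap_succ (by omega)]
  have h₁ := freeGap_nonneg hi n
  have h₂ := freeGap_nonneg hi (n + 1 - i)
  push_cast
  linarith

lemma one_le_freeGap (hi : 2 ≤ i) (hn : 4 ≤ n) : 1 ≤ freeGap i n := by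
  have := sub_three_le_freeGap hi (n := n) (by omega)
  omega

/-- Twice the amount by which `freeGap i n` exceeds `(n - 1) * (n - 2) / 2`, the gap of the
sequence `H n = n`. -/
def gapExcess (i n : ℕ) : ℤ := 2 * freeGap i n - (n - 1) * (n - 2)

lemma gapExcess_succ (hi : 1 ≤ i) (n : ℕ) :
    gapExcess i (n + 1) = gapExcess i n + 2 * (freeGap i (n + 1 - i) - 1) := by
  rw [gapExcess, gapExcess, freeGap_succ hi]
  push_cast
  ring

lemma gapExcess_eq_zero (hn : n ≤ i) : gapExcess i n = 0 := by
  induction n with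
  | zero => norm_num [gapExcess, freeGap_zero]
  | succ n ih =>
    rw [gapExcess_succ (by omega), ih (by omega), Nat.sub_eq_zero_of_le hn, freeGap_zero]
    norm_num

lemma gapExcess_add_three (hi : 2 ≤ i) : gapExcess i (i + 3) = 2 * freeGap i 3 - 6 := by
  have h₁ := gapExcess_succ (i := i) (by omega) i
  have h₂ := gapExcess_succ (i := i) (by omega) (i + 1)
  have h₃ := gapExcess_succ (i := i) (by omega) (i + 2)
  simp only [add_assoc, Nat.reduceAdd, Nat.add_sub_cancel_left] at h₁ h₂ h₃
  rw [h₃, h₂, h₁, gapExcess_eq_zero le_rfl, freeGap_one, freeGap_two hi]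
  ring

lemma gapExcess_monotoneOn (hi : 2 ≤ i) : MonotoneOn (gapExcess i) (Set.Ici (i + 3)) := by
  refine monotoneOn_of_le_add_one Set.ordConnected_Ici fun n _ hn _ ↦ ?_
  have hn' : i + 3 ≤ n := hn
  have := one_le_freeGap hi (n := n + 1 - i) (by omega)
  rw [gapExcess_succ (by omega)]
  linarith

lemma neg_six_le_gapExcess (hi : 2 ≤ i) (hn : i + 3 ≤ n) : -6 ≤ gapExcess i n := by
  have hmono := gapExcess_monotoneOn hi (Set.mem_Ici.2 le_rfl) hn hn
  have h₃ := freeGap_nonneg hi 3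
  rw [gapExcess_add_three hi] at hmono
  linarith

lemma gapExcess_add_four (hi : 4 ≤ i) : gapExcess i (i + 4) = 0 := by
  have h₃ := gapExcess_eq_zero (i := i) (n := 3) (by omega)
  have h₄ := gapExcess_eq_zero (i := i) (n := 4) (by omega)
  rw [gapExcess] at h₃ h₄
  rw [gapExcess_succ (by omega) (i + 3), gapExcess_add_three (by omega),
    show i + 3 + 1 - i = 4 by omega]
  push_cast at h₃ h₄
  linarith

lemma gapExcess_nonneg (hi : 2 ≤ i) (hn : 8 ≤ n) (hin : i + 4 ≤ n) : 0 ≤ gapExcess i n := by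
  obtain ⟨m, him, hmn, hm⟩ : ∃ m, i + 3 ≤ m ∧ m ≤ n ∧ 0 ≤ gapExcess i m := by
    rcases lt_or_ge i 4 with h | h
    · refine ⟨8, by omega, hn, ?_⟩
      interval_cases i <;> norm_num [gapExcess, freeGap]
    · exact ⟨i + 4, by omega, hin, (gapExcess_add_four h).ge⟩
  exact hm.trans (gapExcess_monotoneOn hi him (him.trans hmn) hmn)

lemma ten_le_gapExcess_two (hn : 8 ≤ n) : 10 ≤ gapExcess 2 n := by
  have h_eight : gapExcess 2 8 = 10 := by norm_num [gapExcess, freeGap]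
  exact h_eight.ge.trans (gapExcess_monotoneOn le_rfl (by simp) (Set.mem_Ici.2 (by omega)) hn)

end FreeGap

/-- The coefficients `[1, 0, …, 0, 1, 0, …, 0, N]` of length `L`, with the second `1` at
position `i`, indexed from `1`. -/
def sparseCoeff (L N i : ℕ) : ℕ → ℕ :=
  fun j ↦ if j = 1 ∨ j = i then 1 else if j = L then N else 0

lemma sum_sparseCoeff_mul {L N i m : ℕ} (hi : 2 ≤ i) (hiL : i < L) (hm : 1 ≤ m) (g : ℕ → ℤ) :
    ∑ j ∈ Icc 1 m, (sparseCoeff L N i j : ℤ) * g j =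
      g 1 + (if i ≤ m then g i else 0) + if L ≤ m then N * g L else 0 := by
  have hsplit (j : ℕ) : (sparseCoeff L N i j : ℤ) * g j =
      (if j = 1 then g j else 0) + (if j = i then g j else 0) + if j = L then N * g j else 0 := by
    unfold sparseCoeff
    grind
  simp only [hsplit, sum_add_distrib, sum_ite_eq', mem_Icc]
  simp [hm, show 1 ≤ i by omega, show 1 ≤ L by omega]

namespace IsPLRS

variable {L N i n : ℕ} {H : ℕ → ℕ}

lemma brownGap_eq_freeGap (hH : IsPLRS L (sparseCoeff L N i) H) (hi : 2 ≤ i) (hiL : i < L)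
    (hn : 1 ≤ n) (hnL : n ≤ L) : BrownGap H n = freeGap i n := by
  induction n using Nat.strong_induction_on with
  | _ n ih =>
    obtain rfl | ⟨n, hn', rfl⟩ : n = 1 ∨ ∃ k, 1 ≤ k ∧ n = k + 1 :=
      hn.eq_or_lt.imp Eq.symm fun h ↦ ⟨n - 1, by omega, by omega⟩
    · rw [hH.brownGap_one, freeGap_one]
    · have hnL' : n < L := hnL
      rw [hH.brownGap_succ_of_lt hn' hnL', sum_sparseCoeff_mul hi hiL hn',
        freeGap_succ (by omega), Nat.add_sub_cancel, ih n (by omega) hn' (by omega)]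
      rcases lt_or_ge n i with h | h
      · rw [Nat.sub_eq_zero_of_le h, freeGap_zero]
        simp only [h.not_ge, hnL'.not_ge, if_false, add_zero]
        ring
      · rw [ih (n + 1 - i) (by omega) (by omega) (by omega)]
        simp only [h, hnL'.not_ge, if_true, if_false, add_zero]
        ring

lemma brownGap_sparse_succ_of_ge (hH : IsPLRS L (sparseCoeff L N i) H) (hi : 2 ≤ i)
    (hiL : i < L) (hnL : L ≤ n) :
    BrownGap H (n + 1) = BrownGap H n + BrownGap H (n + 1 - i) +
      N * (BrownGap H (n + 1 - L) - 1) + L - 1 := by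
  rw [hH.brownGap_succ_of_ge hnL, sum_sparseCoeff_mul hi hiL (by omega)]
  simp only [hiL.le, le_refl, if_true, Nat.add_sub_cancel]
  ring

lemma brownGap_add_one (hH : IsPLRS L (sparseCoeff L N i) H) (hi : 2 ≤ i) (hiL : i < L) :
    BrownGap H (L + 1) = freeGap i (L + 1) + 1 - N := by
  rw [hH.brownGap_sparse_succ_of_ge hi hiL le_rfl, Nat.add_sub_cancel_left, hH.brownGap_one,
    hH.brownGap_eq_freeGap hi hiL (by omega) le_rfl,
    hH.brownGap_eq_freeGap hi hiL (by omega) (by omega), freeGap_succ (by omega)]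
  ring

lemma brownGap_add_two (hH : IsPLRS L (sparseCoeff L N i) H) (hi : 2 ≤ i) (hiL : i < L) :
    BrownGap H (L + 2) = freeGap i (L + 2) + 1 - 2 * N := by
  rw [hH.brownGap_sparse_succ_of_ge hi hiL (Nat.le_succ L), hH.brownGap_add_one hi hiL,
    show L + 1 + 1 - L = 2 by omega, hH.brownGap_eq_freeGap hi hiL (n := 2) (by omega) (by omega),
    hH.brownGap_eq_freeGap hi hiL (by omega) (by omega), freeGap_two hi,
    freeGap_succ (by omega) (L + 1)]
  push_cast
  ring

lemma le_brownGap_add_one (hH : IsPLRS L (sparseCoeff L N i) H) (hi : 2 ≤ i)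
    (hiL : i + 2 ≤ L) : (L : ℤ) * (L - 1) - 4 ≤ 2 * (BrownGap H (L + 1) + N) := by
  have hexcess := neg_six_le_gapExcess hi (n := L + 1) (by omega)
  rw [gapExcess] at hexcess
  rw [hH.brownGap_add_one hi (by omega)]
  push_cast at hexcess
  linarith

lemma two_le_brownGap_add_one (hH : IsPLRS L (sparseCoeff L N i) H) (hL : 6 ≤ L)
    (hN : 4 * N ≤ L * (L + 1) + 2) (hi : 2 ≤ i) (hiL : i + 2 ≤ L) :
    2 ≤ BrownGap H (L + 1) := by
  have hbound := hH.le_brownGap_add_one hi hiL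
  zify at hN hL
  nlinarith

lemma brownGap_add_two_nonneg (hH : IsPLRS L (sparseCoeff L N i) H) (hL : 6 ≤ L)
    (hN : 4 * N ≤ L * (L + 1) + 2) (hi : 2 ≤ i) (hiL : i + 2 ≤ L) :
    0 ≤ BrownGap H (L + 2) := by
  have hexcess := gapExcess_nonneg hi (n := L + 2) (by omega) (by omega)
  rw [gapExcess] at hexcess
  rw [hH.brownGap_add_two hi (by omega)]
  zify at hN
  push_cast at hexcess
  linarith

lemma brownGap_add_three_pos (hH : IsPLRS L (sparseCoeff L N i) H) (hL : 6 ≤ L)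
    (hN : 4 * N ≤ L * (L + 1) + 2) (hi : 2 ≤ i) (hiL : i + 2 ≤ L) :
    0 < BrownGap H (L + 3) := by
  rw [hH.brownGap_sparse_succ_of_ge hi (by omega) (n := L + 2) (by omega),
    show L + 2 + 1 - L = 3 by omega,
    hH.brownGap_eq_freeGap hi (by omega) (n := 3) (by omega) (by omega)]
  rcases hi.eq_or_lt with rfl | hi₃
  · have hadd_one := hH.le_brownGap_add_one hi hiL
    have hexcess := ten_le_gapExcess_two (n := L + 2) (by omega)
    rw [gapExcess] at hexcess
    have hthree : freeGap 2 3 = 0 := by norm_num [freeGap]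
    rw [hthree, show L + 2 + 1 - 2 = L + 1 by omega, hH.brownGap_add_two hi (by omega)]
    zify at hN
    push_cast at hexcess ⊢
    linarith
  · have hthree := gapExcess_eq_zero hi₃
    rw [gapExcess] at hthree
    have hadd_two := hH.brownGap_add_two_nonneg hL hN hi hiL
    have hlag := freeGap_nonneg hi (L + 2 + 1 - i)
    rw [hH.brownGap_eq_freeGap hi (by omega) (n := L + 2 + 1 - i) (by omega) (by omega),
      show freeGap i 3 = 1 by push_cast at hthree; linarith]
    linarith

lemma brownGap_succ_pos (hH : IsPLRS L (sparseCoeff L N i) H) (hi : 2 ≤ i) (hiL : i < L)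
    (hnL : L ≤ n) (hprev : 0 ≤ BrownGap H n) (hlag : 0 ≤ BrownGap H (n + 1 - i))
    (hpos : 0 < BrownGap H (n + 1 - L)) : 0 < BrownGap H (n + 1) := by
  have hN : 0 ≤ N * (BrownGap H (n + 1 - L) - 1) := mul_nonneg N.cast_nonneg (by omega)
  rw [hH.brownGap_sparse_succ_of_ge hi hiL hnL]
  omega

lemma brownGap_two_mul_add_two_pos (hH : IsPLRS L (sparseCoeff L N i) H) (hi : 2 ≤ i)
    (hiL : i < L) (hadd_one : 2 ≤ BrownGap H (L + 1))
    (hnonneg : ∀ n, 1 ≤ n → n < 2 * L + 2 → 0 ≤ BrownGap H n) :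
    0 < BrownGap H (2 * L + 2) := by
  have hprev := hH.brownGap_sparse_succ_of_ge hi hiL (n := 2 * L) (by omega)
  have hlast := hH.brownGap_sparse_succ_of_ge hi hiL (n := 2 * L + 1) (by omega)
  rw [show 2 * L + 1 - L = L + 1 by omega] at hprev
  rw [show 2 * L + 1 + 1 - L = L + 2 by omega] at hlast
  have h₀ := hnonneg (2 * L) (by omega) (by omega)
  have h₁ := hnonneg (2 * L + 1 - i) (by omega) (by omega)
  have h₂ := hnonneg (2 * L + 1 + 1 - i) (by omega) (by omega)
  have hgain : (N : ℤ) ≤ N * (BrownGap H (L + 1) - 1) :=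
    le_mul_of_one_le_right N.cast_nonneg (by omega)
  have hloss : 0 ≤ N * BrownGap H (L + 2) :=
    mul_nonneg N.cast_nonneg (hnonneg (L + 2) (by omega) (by omega))
  rw [hlast, hprev]
  linarith

lemma brownGap_nonneg_and_pos (hH : IsPLRS L (sparseCoeff L N i) H) (hL : 6 ≤ L)
    (hN : 4 * N ≤ L * (L + 1) + 2) (hi : 2 ≤ i) (hiL : i + 2 ≤ L) (hn : 1 ≤ n) :
    0 ≤ BrownGap H n ∧ (4 ≤ n → n ≠ L + 2 → 0 < BrownGap H n) := by
  have hadd_one := hH.two_le_brownGap_add_one hL hN hi hiL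
  have hadd_two := hH.brownGap_add_two_nonneg hL hN hi hiL
  have hadd_three := hH.brownGap_add_three_pos hL hN hi hiL
  induction n using Nat.strong_induction_on with
  | _ n ih =>
    obtain h | rfl | rfl | rfl | h :
        n ≤ L ∨ n = L + 1 ∨ n = L + 2 ∨ n = L + 3 ∨ L + 4 ≤ n := by omega
    · rw [hH.brownGap_eq_freeGap hi (by omega) hn h]
      exact ⟨freeGap_nonneg hi n, fun h₄ _ ↦ one_le_freeGap hi h₄⟩
    · exact ⟨by omega, fun _ _ ↦ by omega⟩
    · exact ⟨hadd_two, fun _ h ↦ absurd rfl h⟩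
    · exact ⟨hadd_three.le, fun _ _ ↦ hadd_three⟩
    · suffices hpos : 0 < BrownGap H n from ⟨hpos.le, fun _ _ ↦ hpos⟩
      obtain rfl | hne := eq_or_ne n (2 * L + 2)
      · exact hH.brownGap_two_mul_add_two_pos hi (by omega) hadd_one
          fun m hm hmn ↦ (ih m hmn hm).1
      · obtain ⟨n, rfl⟩ := Nat.exists_eq_add_of_le' hn
        exact hH.brownGap_succ_pos hi (by omega) (by omega) (ih n (by omega) (by omega)).1
          (ih (n + 1 - i) (by omega) (by omega)).1
          ((ih (n + 1 - L) (by omega) (by omega)).2 (by omega) (by omega))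

end IsPLRS

lemma four_mul_le_of_le_ceil {L N : ℕ} (hN : (N : ℤ) ≤ ⌈((L : ℚ) * ((L : ℚ) + 1)) / 4⌉) :
    4 * N ≤ L * (L + 1) + 2 := by
  have hlt : 4 * N < L * (L + 1) + 4 := by
    have : (N : ℚ) < (L : ℚ) * (L + 1) / 4 + 1 :=
      (Int.cast_le.2 hN).trans_lt (Int.ceil_lt_add_one _)
    qify
    linarith
  obtain ⟨t, ht⟩ := Nat.even_mul_succ_self L
  omega

theorem stmt13_general (L N i : ℕ) (hL : 6 ≤ L)
    (hN : (N : ℤ) ≤ ⌈((L : ℚ) * ((L : ℚ) + 1)) / 4⌉)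
    (hi : 2 ≤ i) (hi' : i ≤ L - 2) (H : ℕ → ℕ) (hH : IsPLRS L (sparseCoeff L N i) H) :
    SeqComplete H :=
  seqComplete_of_brownGap_nonneg (fun _ ↦ hH.pos) fun _ hn ↦
    (hH.brownGap_nonneg_and_pos hL (four_mul_le_of_le_ceil hN) hi (by omega) hn).1

theorem stmt13 (L N i : ℕ) (hL : 6 ≤ L)
    (hN : (N : ℤ) = ⌈((L : ℚ) * ((L : ℚ) + 1)) / 4⌉)
    (hi : 2 ≤ i) (hi' : i ≤ L - 2) (H : ℕ → ℕ)
    (hH : IsPLRS L (fun j => if j = 1 ∨ j = i then 1 else if j = L then N else 0) H) :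
    SeqComplete H :=
  stmt13_general L N i hL hN.le hi hi' H hH
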